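/- arXiv:1405.0374 — 3 statements merged into one kernel-verified Lean document; each statement's English description precedes it below -/
import Mathlib

section
/- Let X_1, X_2, ... be independent and identically distributed real-valued random variables with common distribution function F, and let 0 < p < 1. Suppose that ξ_p is the unique solution x of F(x-) ≤ p ≤ F(x), where F(x-) denotes the left limit of F at x. Then the empirical p-th quantile ξ̂_{p,n} computed from the first n observations converges almost surely to ξ_p as n → ∞. -/
open MeasureTheory ProbabilityTheory Filter Topology

/-- The `p`-th quantile of a distribution function `F`: `inf {x | F x ≥ p}`. -/
noncomputable def quantileOf (F : ℝ → ℝ) (p : ℝ) : ℝ := sInf {x | p ≤ F x}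

/-- Empirical distribution function of the first `n` observations of `X`. -/
noncomputable def empCDF {Ω : Type*} (X : ℕ → Ω → ℝ) (n : ℕ) (ω : Ω) (x : ℝ) : ℝ :=
  (n : ℝ)⁻¹ * ∑ j ∈ Finset.range n, if X j ω ≤ x then (1 : ℝ) else 0

/-- Empirical `p`-th quantile computed from the first `n` observations of `X`. -/
noncomputable def empQuantile {Ω : Type*} (X : ℕ → Ω → ℝ) (n : ℕ) (p : ℝ) (ω : Ω) : ℝ :=
  quantileOf (empCDF X n ω) p

/-- The empirical distribution function is monotone. -/
lemma empCDF_mono {Ω : Type*} (X : ℕ → Ω → ℝ) (n : ℕ) (ω : Ω) : Monotone (empCDF X n ω) := by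
  intro x y hxy
  unfold empCDF
  apply mul_le_mul_of_nonneg_left _ (by positivity)
  apply Finset.sum_le_sum
  intro j _
  by_cases h : X j ω ≤ x
  · simp [h, h.trans hxy]
  · simp only [h, if_false]
    split_ifs <;> norm_num

/-- Strong law of large numbers for the empirical distribution function at a point. -/
lemma empCDF_tendsto {Ω : Type*} [MeasurableSpace Ω] (P : Measure Ω) [IsProbabilityMeasure P]
    (X : ℕ → Ω → ℝ) (hmeas : ∀ i, Measurable (X i))
    (hindep : iIndepFun X P)
    (hident : ∀ i, IdentDistrib (X i) (X 0) P P) (x : ℝ) :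
    ∀ᵐ ω ∂P, Tendsto (fun n => empCDF X n ω x) atTop (𝓝 (P {ω | X 0 ω ≤ x}).toReal) := by
  let g : ℝ → ℝ := fun y => if y ≤ x then 1 else 0
  have hg : Measurable g := Measurable.ite measurableSet_Iic measurable_const measurable_const
  have hS : MeasurableSet {ω | X 0 ω ≤ x} := hmeas 0 measurableSet_Iic
  have h0 : g ∘ X 0 = Set.indicator {ω | X 0 ω ≤ x} (fun _ => (1 : ℝ)) := by
    ext ω
    simp [g, Set.indicator_apply]
  have hint : Integrable (g ∘ X 0) P := by
    rw [h0]
    exact (integrable_const _).indicator hS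
  have hE : ∫ ω, (g ∘ X 0) ω ∂P = (P {ω | X 0 ω ≤ x}).toReal := by
    rw [h0, integral_indicator hS]
    simp [Measure.real]
  have := strong_law_ae (μ := P) (fun i => g ∘ X i) hint
    (fun i j hij => (hindep.indepFun hij).comp hg hg) (fun i => (hident i).comp hg)
  rw [hE] at this
  exact this

/-- Strong consistency of the empirical quantile (Serfling, Theorem 2.3.1). -/
theorem empQuantile_strong_consistency
    {Ω : Type*} [MeasurableSpace Ω] (P : Measure Ω) [IsProbabilityMeasure P]
    (X : ℕ → Ω → ℝ) (hmeas : ∀ i, Measurable (X i))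
    (hindep : iIndepFun X P)
    (hident : ∀ i, IdentDistrib (X i) (X 0) P P)
    (F : ℝ → ℝ) (hF : ∀ x, F x = (P {ω | X 0 ω ≤ x}).toReal)
    (p : ℝ) (hp0 : 0 < p) (hp1 : p < 1)
    (ξ : ℝ) (hξ : Function.leftLim F ξ ≤ p ∧ p ≤ F ξ)
    (huniq : ∀ x, Function.leftLim F x ≤ p → p ≤ F x → x = ξ) :
    ∀ᵐ ω ∂P, Tendsto (fun n => empQuantile X n p ω) atTop (𝓝 ξ) := by
  have hmono : Monotone F := by
    intro x y hxy
    rw [hF, hF]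
    exact ENNReal.toReal_mono (measure_ne_top _ _)
      (measure_mono fun ω (h : X 0 ω ≤ x) => h.trans hxy)
  have hlo : ∀ x, x < ξ → F x < p := by
    intro x hx
    by_contra! h
    exact hx.ne (huniq x ((hmono.leftLim_le le_rfl).trans ((hmono.le_leftLim hx).trans hξ.1)) h)
  have hhi : ∀ x, ξ < x → p < F x := by
    intro x hx
    by_contra! h
    exact hx.ne' (huniq x ((hmono.leftLim_le le_rfl).trans h) (hξ.2.trans (hmono hx.le)))
  have hall : ∀ᵐ ω ∂P, ∀ q : ℚ, Tendsto (fun n => empCDF X n ω q) atTop (𝓝 (F q)) := by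
    rw [ae_all_iff]
    intro q
    rw [hF]
    exact empCDF_tendsto P X hmeas hindep hident q
  filter_upwards [hall] with ω hω
  have key : ∀ a b : ℚ, (a : ℝ) < ξ → ξ < b →
      ∀ᶠ n in atTop, (a : ℝ) ≤ empQuantile X n p ω ∧ empQuantile X n p ω ≤ b := by
    intro a b ha hb
    filter_upwards [(hω a).eventually_lt_const (hlo a ha),
      (hω b).eventually_const_lt (hhi b hb)] with n h1 h2
    have hlb : ∀ y ∈ {x | p ≤ empCDF X n ω x}, (a : ℝ) ≤ y := by
      intro y hy
      by_contra! h
      exact absurd (hy.trans (empCDF_mono X n ω h.le)) (not_le.2 h1)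
    exact ⟨le_csInf ⟨b, h2.le⟩ hlb, csInf_le ⟨a, hlb⟩ h2.le⟩
  obtain ⟨a0, -, ha0⟩ := exists_rat_btwn (sub_one_lt ξ)
  obtain ⟨b0, hb0, -⟩ := exists_rat_btwn (lt_add_one ξ)
  refine tendsto_order.2 ⟨fun c hc => ?_, fun c hc => ?_⟩
  · obtain ⟨a, hca, ha⟩ := exists_rat_btwn hc
    exact (key a b0 ha hb0).mono fun n h => hca.trans_le h.1
  · obtain ⟨b, hb, hbc⟩ := exists_rat_btwn hc
    exact (key a0 b ha0 hb).mono fun n h => h.2.trans_lt hbc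
end

section
/- Let X_1, X_2, ... be independent and identically distributed real-valued random variables with common distribution function F, and let 0 < p < 1. Suppose F possesses a density f in a neighbourhood of ξ_p with f positive and continuous at ξ_p. Then √n (ξ̂_{p,n} − ξ_p) converges in distribution, as n → ∞, to a centered Gaussian distribution with variance p(1−p)/f(ξ_p)². -/
open MeasureTheory ProbabilityTheory Filter Topology

lemma empCDF_right {Ω : Type*} (X : ℕ → Ω → ℝ) (n : ℕ) (ω : Ω) (a : ℝ) :
    ∀ᶠ b in 𝓝[>] a, empCDF X n ω b = empCDF X n ω a := by
  have h : ∀ j ∈ Finset.range n, ∀ᶠ b in 𝓝[>] a,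
      (if X j ω ≤ b then (1:ℝ) else 0) = if X j ω ≤ a then (1:ℝ) else 0 := by
    intro j _
    by_cases hj : X j ω ≤ a
    · filter_upwards [self_mem_nhdsWithin] with b hb
      rw [if_pos hj, if_pos (hj.trans (le_of_lt hb))]
    · push Not at hj
      filter_upwards [Ioo_mem_nhdsGT hj] with b hb
      rw [if_neg (not_le.2 hj), if_neg (not_le.2 hb.2)]
  filter_upwards [(Finset.eventually_all _).2 h] with b hb
  unfold empCDF
  rw [Finset.sum_congr rfl hb]

lemma empQuantile_le_iff {Ω : Type*} (X : ℕ → Ω → ℝ) (n : ℕ) (hn : n ≠ 0) (ω : Ω) (p : ℝ)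
    (hp0 : 0 < p) (hp1 : p < 1) (a : ℝ) :
    empQuantile X n p ω ≤ a ↔ p ≤ empCDF X n ω a := by
  have hn' : (n : ℝ) ≠ 0 := by exact_mod_cast hn
  have hne : {x | p ≤ empCDF X n ω x}.Nonempty := by
    refine ⟨∑ j ∈ Finset.range n, |X j ω|, ?_⟩
    have : empCDF X n ω (∑ j ∈ Finset.range n, |X j ω|) = 1 := by
      unfold empCDF
      rw [Finset.sum_congr rfl (g := fun _ => (1:ℝ))]
      · simp [hn']
      · intro j hj
        rw [if_pos]
        exact (le_abs_self _).trans
          (Finset.single_le_sum (f := fun j => |X j ω|) (fun _ _ => abs_nonneg _) hj)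
    simp only [Set.mem_ofPred_eq, this]
    exact hp1.le
  have hbdd : BddBelow {x | p ≤ empCDF X n ω x} := by
    refine ⟨-∑ j ∈ Finset.range n, |X j ω|, ?_⟩
    intro x hx
    by_contra hlt
    push Not at hlt
    have : empCDF X n ω x = 0 := by
      unfold empCDF
      rw [Finset.sum_congr rfl (g := fun _ => (0:ℝ))]
      · simp
      · intro j hj
        rw [if_neg]
        have := Finset.single_le_sum (f := fun j => |X j ω|) (fun _ _ => abs_nonneg _) hj
        have h2 := neg_abs_le (X j ω)
        linarith
    simp only [Set.mem_ofPred_eq, this] at hx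
    linarith
  unfold empQuantile quantileOf
  constructor
  · intro h
    obtain ⟨b, hb, hab⟩ := ((empCDF_right X n ω a).and self_mem_nhdsWithin).exists
    obtain ⟨x, hx, hxb⟩ := exists_lt_of_csInf_lt hne (lt_of_le_of_lt h hab)
    rw [← hb]
    exact le_trans hx (empCDF_mono X n ω hxb.le)
  · intro h
    exact csInf_le hbdd h

lemma measurable_empCDF {Ω : Type*} [MeasurableSpace Ω] (X : ℕ → Ω → ℝ)
    (hmeas : ∀ i, Measurable (X i)) (n : ℕ) (a : ℝ) :
    Measurable (fun ω => empCDF X n ω a) := by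
  unfold empCDF
  refine Measurable.const_mul (Finset.measurable_fun_sum _ fun j _ => ?_) _
  exact Measurable.ite (hmeas j measurableSet_Iic) measurable_const measurable_const

lemma measurable_empQuantile {Ω : Type*} [MeasurableSpace Ω] (X : ℕ → Ω → ℝ)
    (hmeas : ∀ i, Measurable (X i)) (n : ℕ) (p : ℝ) (hp0 : 0 < p) (hp1 : p < 1) :
    Measurable (empQuantile X n p) := by
  rcases eq_or_ne n 0 with rfl | hn
  · have : empQuantile X 0 p = fun _ => sInf {x : ℝ | p ≤ 0} := by
      ext ω; simp [empQuantile, quantileOf, empCDF]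
    rw [this]; exact measurable_const
  · refine measurable_of_Iic fun a => ?_
    have : empQuantile X n p ⁻¹' Set.Iic a = {ω | p ≤ empCDF X n ω a} := by
      ext ω; exact empQuantile_le_iff X n hn ω p hp0 hp1 a
    rw [this]
    exact measurableSet_le measurable_const (measurable_empCDF X hmeas n a)

lemma quantile_facts {Ω : Type*} [MeasurableSpace Ω] (P : Measure Ω) [IsProbabilityMeasure P]
    (X0 : Ω → ℝ) (hmeas : Measurable X0)
    (F f : ℝ → ℝ) (hF : ∀ x, F x = (P {ω | X0 ω ≤ x}).toReal)
    (p : ℝ) (hp0 : 0 < p) (hp1 : p < 1)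
    (ξ : ℝ) (hξ : ξ = quantileOf F p)
    (hdens : ∃ U ∈ 𝓝 ξ, ∀ x ∈ U, F x = ∫ s in Set.Iic x, f s)
    (hfcont : ContinuousAt f ξ) :
    F ξ = p ∧ HasDerivAt F (f ξ) ξ := by
  have : IsProbabilityMeasure (P.map X0) := Measure.isProbabilityMeasure_map hmeas.aemeasurable
  have hcdf : F = cdf (P.map X0) := by
    ext x
    rw [hF, cdf_eq_real, Measure.real, Measure.map_apply hmeas measurableSet_Iic]
    rfl
  have hmono : Monotone F := hcdf ▸ monotone_cdf _
  have hne : {x | p ≤ F x}.Nonempty := by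
    have := (tendsto_cdf_atTop (P.map X0)).eventually (lt_mem_nhds hp1)
    obtain ⟨x, hx⟩ := this.exists
    exact ⟨x, by rw [hcdf]; exact hx.le⟩
  have hbdd : BddBelow {x | p ≤ F x} := by
    have := (tendsto_cdf_atBot (P.map X0)).eventually (gt_mem_nhds hp0)
    obtain ⟨x, hx⟩ := this.exists
    refine ⟨x, fun y hy => ?_⟩
    by_contra h
    push Not at h
    have h1 := hmono h.le
    rw [Set.mem_ofPred_eq] at hy
    rw [← hcdf] at hx
    linarith
  have hge : p ≤ F ξ := by
    have hr : ContinuousWithinAt F (Set.Ici ξ) ξ := by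
      rw [hcdf]; exact (cdf (P.map X0)).right_continuous ξ
    refine ge_of_tendsto (hr.mono Set.Ioi_subset_Ici_self).tendsto ?_
    filter_upwards [self_mem_nhdsWithin] with b hb
    have : sInf {x | p ≤ F x} < b := by rw [← quantileOf, ← hξ]; exact hb
    obtain ⟨x, hx, hxb⟩ := exists_lt_of_csInf_lt hne this
    exact le_trans hx (hmono hxb.le)
  have hlt : ∀ x < ξ, F x < p := by
    intro x hx
    by_contra h
    push Not at h
    have : ξ ≤ x := by rw [hξ]; exact csInf_le hbdd h
    linarith
  obtain ⟨U, hU, hUF⟩ := hdens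
  have hint : ∃ x1 > ξ, IntegrableOn f (Set.Iic x1) := by
    obtain ⟨x1, hx1, h⟩ := (Filter.Eventually.and (nhdsWithin_le_nhds hU : ∀ᶠ x in 𝓝[>] ξ, x ∈ U)
      self_mem_nhdsWithin).exists
    refine ⟨x1, h, ?_⟩
    by_contra hni
    have h1 := hUF x1 hx1
    rw [integral_undef hni] at h1
    have := hmono (le_of_lt h)
    linarith
  obtain ⟨x1, hx1, hint⟩ := hint
  have hξU := mem_of_mem_nhds hU
  have hder : HasDerivAt F (f ξ) ξ := by
    have h1 : HasDerivAt (fun u => ∫ s in ξ..u, f s) (f ξ) ξ := by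
      apply intervalIntegral.integral_hasDerivAt_right
      · simp
      · exact ⟨Set.Iic x1, Iic_mem_nhds hx1, hint.aestronglyMeasurable⟩
      · exact hfcont
    have h2 := h1.const_add (F ξ)
    refine h2.congr_of_eventuallyEq ?_
    filter_upwards [hU, Iic_mem_nhds hx1] with x hx hx1'
    rw [hUF x hx, hUF ξ hξU, ← intervalIntegral.integral_Iic_sub_Iic
      (hint.mono_set (Set.Iic_subset_Iic.2 (le_of_lt hx1)))
      (hint.mono_set (Set.Iic_subset_Iic.2 hx1'))]
    ring
  refine ⟨le_antisymm ?_ hge, hder⟩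
  refine le_of_tendsto (hder.continuousAt.tendsto.mono_left (nhdsWithin_le_nhds (s := Set.Iio ξ))) ?_
  filter_upwards [self_mem_nhdsWithin] with x hx
  exact (hlt x hx).le

lemma integral_ind {Ω : Type*} [MeasurableSpace Ω] (P : Measure Ω) (Y : Ω → ℝ) (hY : Measurable Y)
    (a : ℝ) :
    ∫ ω, (if Y ω ≤ a then (1:ℝ) else 0) ∂P = (P {ω | Y ω ≤ a}).toReal := by
  have : (fun ω => if Y ω ≤ a then (1:ℝ) else 0) = {ω | Y ω ≤ a}.indicator 1 := by
    ext ω; simp [Set.indicator]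
  have hm : MeasurableSet {ω | Y ω ≤ a} := hY measurableSet_Iic
  rw [this, integral_indicator_one hm]
  rfl

lemma measurable_ind (a : ℝ) : Measurable (fun x : ℝ => if x ≤ a then (1:ℝ) else 0) :=
  Measurable.ite measurableSet_Iic measurable_const measurable_const

lemma memLp_ind {Ω : Type*} [MeasurableSpace Ω] (P : Measure Ω) [IsProbabilityMeasure P]
    (Y : Ω → ℝ) (hY : Measurable Y) (a : ℝ) (q : ENNReal) :
    MemLp (fun ω => if Y ω ≤ a then (1:ℝ) else 0) q P := by
  refine MemLp.of_bound ((measurable_ind a).comp hY).aestronglyMeasurable 1 (.of_forall fun ω => ?_)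
  split_ifs <;> simp

lemma chebyshev_diff {Ω : Type*} [MeasurableSpace Ω] (P : Measure Ω) [IsProbabilityMeasure P]
    (X : ℕ → Ω → ℝ) (hmeas : ∀ i, Measurable (X i))
    (hindep : iIndepFun X P)
    (hident : ∀ i, IdentDistrib (X i) (X 0) P P)
    (F : ℝ → ℝ) (hF : ∀ x, F x = (P {ω | X 0 ω ≤ x}).toReal)
    (n : ℕ) (hn : n ≠ 0) (a b c : ℝ) (hc : 0 < c) :
    P {ω | c ≤ |√n * (empCDF X n ω a - empCDF X n ω b) - √n * (F a - F b)|} ≤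
      ENNReal.ofReal (|F a - F b| / c ^ 2) := by
  have hn' : (n : ℝ) ≠ 0 := by exact_mod_cast hn
  let φ : ℝ → ℝ := fun x => (if x ≤ a then (1:ℝ) else 0) - (if x ≤ b then (1:ℝ) else 0)
  have hφ : Measurable φ := (measurable_ind a).sub (measurable_ind b)
  have hLp : ∀ i, MemLp (φ ∘ X i) 2 P := fun i =>
    (memLp_ind P (X i) (hmeas i) a 2).sub (memLp_ind P (X i) (hmeas i) b 2)
  have hid : ∀ i, IdentDistrib (φ ∘ X i) (φ ∘ X 0) P P := fun i => (hident i).comp hφ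
  have hmean0 : ∫ ω, (φ ∘ X 0) ω ∂P = F a - F b := by
    have := integral_sub (μ := P) ((memLp_ind P (X 0) (hmeas 0) a 1).integrable le_rfl)
      ((memLp_ind P (X 0) (hmeas 0) b 1).integrable le_rfl)
    rw [integral_ind P _ (hmeas 0), integral_ind P _ (hmeas 0), ← hF, ← hF] at this
    exact this
  have hmean : ∀ i, ∫ ω, (φ ∘ X i) ω ∂P = F a - F b := fun i => by
    rw [(hid i).integral_eq, hmean0]
  have hvar0 : variance (φ ∘ X 0) P ≤ |F a - F b| := by
    refine (variance_le_expectation_sq (hφ.comp (hmeas 0)).aestronglyMeasurable).trans ?_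
    rcases le_total a b with hab | hab
    · have : (φ ∘ X 0) ^ 2 = fun ω => - (φ ∘ X 0) ω := by
        ext ω
        simp only [Pi.pow_apply, Function.comp, φ]
        split_ifs <;> first | exact absurd (le_trans (by assumption) hab) (by assumption) | norm_num
      rw [this, integral_neg, hmean0]
      exact neg_le_abs _
    · have : (φ ∘ X 0) ^ 2 = fun ω => (φ ∘ X 0) ω := by
        ext ω
        simp only [Pi.pow_apply, Function.comp, φ]
        split_ifs <;> first | exact absurd (le_trans (by assumption) hab) (by assumption) | norm_num
      rw [this, hmean0]
      exact le_abs_self _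
  let S : Ω → ℝ := ∑ i ∈ Finset.range n, φ ∘ X i
  have hSLp : MemLp S 2 P := memLp_finsetSum' _ fun i _ => hLp i
  have hSmean : ∫ ω, S ω ∂P = n * (F a - F b) := by
    simp only [S, Finset.sum_apply]
    rw [integral_finsetSum _ fun i _ => (hLp i).integrable (by norm_num)]
    simp only [hmean]
    simp [mul_sub]
  have hSvar : variance S P = n * variance (φ ∘ X 0) P := by
    rw [IndepFun.variance_sum (fun i _ => hLp i)
      (fun i _ j _ hij => (hindep.indepFun hij).comp hφ hφ)]
    rw [Finset.sum_congr rfl fun i _ => (hid i).variance_eq]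
    simp
  let D : Ω → ℝ := fun ω => (√n * (n:ℝ)⁻¹) * S ω
  have hD : ∀ ω, √n * (empCDF X n ω a - empCDF X n ω b) = D ω := by
    intro ω
    simp only [D, S, empCDF, Finset.sum_apply, Function.comp, φ, Finset.sum_sub_distrib]
    ring
  have hDmean : ∫ ω, D ω ∂P = √n * (F a - F b) := by
    simp only [D]
    rw [integral_const_mul, hSmean]
    field_simp
  have hDvar : variance D P = variance (φ ∘ X 0) P := by
    simp only [D]
    rw [variance_const_mul, hSvar, mul_pow, Real.sq_sqrt (by positivity)]
    field_simp
  have := meas_ge_le_variance_div_sq (hSLp.const_mul (√n * (n:ℝ)⁻¹)) hc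
  change P {ω | c ≤ |D ω - ∫ ω, D ω ∂P|} ≤ ENNReal.ofReal (variance D P / c ^ 2) at this
  rw [hDmean, hDvar] at this
  simp only [hD]
  refine this.trans (ENNReal.ofReal_le_ofReal ?_)
  gcongr

lemma diff_tendstoInMeasure {Ω : Type*} [MeasurableSpace Ω] (P : Measure Ω) [IsProbabilityMeasure P]
    (X : ℕ → Ω → ℝ) (hmeas : ∀ i, Measurable (X i))
    (hindep : iIndepFun X P)
    (hident : ∀ i, IdentDistrib (X i) (X 0) P P)
    (F : ℝ → ℝ) (hF : ∀ x, F x = (P {ω | X 0 ω ≤ x}).toReal)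
    (ξ d t : ℝ) (hder : HasDerivAt F d ξ) :
    TendstoInMeasure P (fun (n : ℕ) ω => √n * (empCDF X n ω (ξ + (√n)⁻¹ * t) - empCDF X n ω ξ))
      atTop (fun _ => t * d) := by
  have hsq : Tendsto (fun n : ℕ => √(n:ℝ)) atTop atTop :=
    Real.tendsto_sqrt_atTop.comp tendsto_natCast_atTop_atTop
  have hmean : Tendsto (fun n : ℕ => √n * (F (ξ + (√n)⁻¹ * t) - F ξ)) atTop (𝓝 (t * d)) := by
    have := (hder.hasFDerivAt.lim_real t).comp hsq
    simpa [Function.comp_def] using this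
  have hF0 : Tendsto (fun n : ℕ => |F (ξ + (√n)⁻¹ * t) - F ξ|) atTop (𝓝 0) := by
    have h1 : Tendsto (fun n : ℕ => ξ + (√n)⁻¹ * t) atTop (𝓝 ξ) := by
      simpa using ((tendsto_inv_atTop_zero.comp hsq).mul_const t).const_add ξ
    have h2 := (hder.continuousAt.tendsto.comp h1).sub_const (F ξ)
    simpa using h2.abs
  rw [tendstoInMeasure_iff_norm]
  intro ε hε
  have hlim : Tendsto (fun n : ℕ => ENNReal.ofReal (|F (ξ + (√n)⁻¹ * t) - F ξ| / (ε/2) ^ 2))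
      atTop (𝓝 0) := by
    have := ENNReal.tendsto_ofReal (hF0.div_const ((ε/2)^2))
    simpa using this
  refine tendsto_of_tendsto_of_tendsto_of_le_of_le' tendsto_const_nhds hlim
    (.of_forall fun _ => zero_le) ?_
  filter_upwards [eventually_ne_atTop 0, hmean.eventually (Metric.ball_mem_nhds _ (half_pos hε))]
    with n hn hball
  refine le_trans (measure_mono ?_)
    (chebyshev_diff P X hmeas hindep hident F hF n hn (ξ + (√n)⁻¹ * t) ξ (ε/2) (half_pos hε))
  intro ω hω
  simp only [Set.mem_ofPred_eq, Real.norm_eq_abs] at hω ⊢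
  rw [Real.dist_eq] at hball
  have := abs_sub_le (√n * (empCDF X n ω (ξ + (√n)⁻¹ * t) - empCDF X n ω ξ))
    (√n * (F (ξ + (√n)⁻¹ * t) - F ξ)) (t * d)
  linarith

lemma emp_clt {Ω : Type*} [MeasurableSpace Ω] (P : Measure Ω) [IsProbabilityMeasure P]
    (X : ℕ → Ω → ℝ) (hmeas : ∀ i, Measurable (X i))
    (hindep : iIndepFun X P)
    (hident : ∀ i, IdentDistrib (X i) (X 0) P P)
    (F : ℝ → ℝ) (hF : ∀ x, F x = (P {ω | X 0 ω ≤ x}).toReal)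
    (p ξ : ℝ) (hξ : F ξ = p) :
    TendstoInDistribution (fun (n : ℕ) ω => √n * (empCDF X n ω ξ - p)) atTop (id : ℝ → ℝ)
      (fun _ => P) (gaussianReal 0 (p * (1 - p)).toNNReal) := by
  let φ : ℝ → ℝ := fun x => (if x ≤ ξ then (1:ℝ) else 0)
  have hφ : Measurable φ := measurable_ind ξ
  have hmean : ∫ ω, (φ ∘ X 0) ω ∂P = p := by
    rw [← hξ, hF, ← integral_ind P _ (hmeas 0)]; rfl
  have hLp : MemLp (φ ∘ X 0) 2 P := memLp_ind P (X 0) (hmeas 0) ξ 2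
  have hvar : variance (φ ∘ X 0) P = p * (1 - p) := by
    rw [variance_eq_sub hLp]
    have : (φ ∘ X 0) ^ 2 = φ ∘ X 0 := by
      ext ω
      simp only [Pi.pow_apply, Function.comp, φ]
      split_ifs <;> norm_num
    rw [this, hmean]; ring
  have hlaw : HasLaw (id : ℝ → ℝ) (gaussianReal 0 (variance (φ ∘ X 0) P).toNNReal)
      (gaussianReal 0 (p * (1 - p)).toNNReal) := by
    rw [hvar]; exact HasLaw.id
  have := tendstoInDistribution_inv_sqrt_mul_sum_sub (X := fun i => φ ∘ X i) hlaw hLp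
    (hindep.comp (fun _ => φ) (fun _ => hφ)) (fun i => (hident i).comp hφ)
  convert! this using 3 with n ω
  rw [hmean]
  simp only [empCDF, Function.comp, φ]
  rcases eq_or_ne n 0 with rfl | hn
  · simp
  · have hn' : (0:ℝ) < n := by positivity
    have h2 : √(n:ℝ) ≠ 0 := by positivity
    have h3 : √(n:ℝ) * √n = n := Real.mul_self_sqrt hn'.le
    field_simp
    rw [pow_two, h3]

lemma cdf_tendsto {Ω : Type*} [MeasurableSpace Ω] (P : Measure Ω) [IsProbabilityMeasure P]
    (X : ℕ → Ω → ℝ) (hmeas : ∀ i, Measurable (X i))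
    (hindep : iIndepFun X P)
    (hident : ∀ i, IdentDistrib (X i) (X 0) P P)
    (F : ℝ → ℝ) (hF : ∀ x, F x = (P {ω | X 0 ω ≤ x}).toReal)
    (p ξ d t : ℝ) (hp0 : 0 < p) (hp1 : p < 1) (hξ : F ξ = p) (hd : 0 < d)
    (hder : HasDerivAt F d ξ) :
    Tendsto (fun n : ℕ => P {ω | √n * (empQuantile X n p ω - ξ) ≤ t}) atTop
      (𝓝 (gaussianReal 0 (p * (1 - p) / d ^ 2).toNNReal (Set.Iic t))) := by
  have hpp : 0 < p * (1 - p) := mul_pos hp0 (by linarith)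
  have hv : (p * (1 - p)).toNNReal ≠ 0 := by simpa using hpp
  have hV := (emp_clt P X hmeas hindep hident F hF p ξ hξ).add_of_tendstoInMeasure_const
    (diff_tendstoInMeasure P X hmeas hindep hident F hF ξ d t hder)
    (fun n => (((measurable_empCDF X hmeas n _).sub (measurable_empCDF X hmeas n _)).const_mul
      _).aemeasurable)
  have hmap : (gaussianReal 0 (p * (1 - p)).toNNReal).map (fun ω => id ω + t * d) =
      gaussianReal (t * d) (p * (1 - p)).toNNReal := by
    simpa using gaussianReal_map_add_const (μ := 0) (v := (p * (1 - p)).toNNReal) (t * d)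
  have := noAtoms_gaussianReal (μ := t * d) hv
  have hlim := ProbabilityMeasure.tendsto_measure_of_null_frontier_of_tendsto' hV.tendsto
    (E := Set.Ici 0) (by
      simp only [ProbabilityMeasure.coe_mk]
      rw [hmap, frontier_Ici]
      simp)
  simp only [ProbabilityMeasure.coe_mk] at hlim
  have hval : ((gaussianReal 0 (p * (1 - p)).toNNReal).map (fun ω => id ω + t * d)) (Set.Ici 0) =
      gaussianReal 0 (p * (1 - p) / d ^ 2).toNNReal (Set.Iic t) := by
    have h1 := gaussianReal_map_const_mul (μ := 0) (v := (p * (1 - p)).toNNReal) (-d⁻¹)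
    have h2 : gaussianReal 0 (p * (1 - p) / d ^ 2).toNNReal =
        (gaussianReal 0 (p * (1 - p)).toNNReal).map (-d⁻¹ * ·) := by
      rw [h1]
      congr 1
      · simp
      · ext
        rw [NNReal.coe_mul, Real.coe_toNNReal _ hpp.le, Real.coe_toNNReal _ (by positivity)]
        simp only [NNReal.coe_mk]
        field_simp
    rw [h2, Measure.map_apply (by fun_prop) measurableSet_Ici,
      Measure.map_apply (by fun_prop) measurableSet_Iic]
    congr 1
    ext x
    simp only [Set.mem_preimage, Set.mem_Ici, Set.mem_Iic, id]
    rw [neg_mul, neg_le, ← div_eq_inv_mul, le_div_iff₀ hd]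
    constructor <;> intro h <;> linarith
  rw [hval] at hlim
  refine hlim.congr' ?_
  filter_upwards [eventually_ne_atTop 0] with n hn
  rw [Measure.map_apply_of_aemeasurable (hV.forall_aemeasurable n) measurableSet_Ici]
  congr 1
  ext ω
  have hs : (0:ℝ) < √n := by positivity
  simp only [Set.mem_preimage, Set.mem_Ici, Pi.add_apply, Set.mem_ofPred_eq]
  have e1 : √n * (empQuantile X n p ω - ξ) ≤ t ↔ empQuantile X n p ω ≤ ξ + (√n)⁻¹ * t := by
    rw [← le_div_iff₀' hs, sub_le_iff_le_add', div_eq_inv_mul]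
  rw [e1, empQuantile_le_iff X n hn ω p hp0 hp1, ← mul_add, mul_nonneg_iff_of_pos_left hs]
  constructor <;> intro h <;> linarith

/-- Asymptotic normality of the empirical quantile (Serfling, Corollary 2.3.3B):
`√n (ξ̂_{p,n} − ξ_p) →d N(0, p(1−p)/f(ξ_p)²)`.  Convergence in distribution is
expressed via convergence of integrals of bounded continuous test functions. -/
theorem empQuantile_asymptotic_normality
    {Ω : Type*} [MeasurableSpace Ω] (P : Measure Ω) [IsProbabilityMeasure P]
    (X : ℕ → Ω → ℝ) (hmeas : ∀ i, Measurable (X i))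
    (hindep : iIndepFun X P)
    (hident : ∀ i, IdentDistrib (X i) (X 0) P P)
    (F f : ℝ → ℝ) (hF : ∀ x, F x = (P {ω | X 0 ω ≤ x}).toReal)
    (p : ℝ) (hp0 : 0 < p) (hp1 : p < 1)
    (ξ : ℝ) (hξ : ξ = quantileOf F p)
    (hdens : ∃ U ∈ 𝓝 ξ, ∀ x ∈ U, F x = ∫ s in Set.Iic x, f s)
    (hfpos : 0 < f ξ) (hfcont : ContinuousAt f ξ) :
    ∀ g : BoundedContinuousFunction ℝ ℝ,
      Tendsto (fun n : ℕ => ∫ ω, g (Real.sqrt n * (empQuantile X n p ω - ξ)) ∂P) atTop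
        (𝓝 (∫ x, g x ∂(gaussianReal 0 (Real.toNNReal (p * (1 - p) / (f ξ) ^ 2))))) := by
  obtain ⟨hFξ, hder⟩ := quantile_facts P (X 0) (hmeas 0) F f hF p hp0 hp1 ξ hξ hdens hfcont
  have hT : ∀ n : ℕ, Measurable (fun ω => √n * (empQuantile X n p ω - ξ)) := fun n =>
    ((measurable_empQuantile X hmeas n p hp0 hp1).sub_const ξ).const_mul _
  let μs : ℕ → ProbabilityMeasure ℝ := fun n =>
    ⟨P.map (fun ω => √n * (empQuantile X n p ω - ξ)),
      Measure.isProbabilityMeasure_map (hT n).aemeasurable⟩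
  let μ : ProbabilityMeasure ℝ :=
    ⟨gaussianReal 0 (Real.toNNReal (p * (1 - p) / (f ξ) ^ 2)), inferInstance⟩
  have hIic : ∀ t : ℝ, Tendsto (fun n => μs n (Set.Iic t)) atTop (𝓝 (μ (Set.Iic t))) := by
    intro t
    have h := cdf_tendsto P X hmeas hindep hident F hF p ξ (f ξ) t hp0 hp1 hFξ hfpos hder
    have h' := (ENNReal.tendsto_toNNReal (measure_ne_top _ _)).comp h
    refine h'.congr fun n => ?_
    change _ = (P.map (fun ω => √n * (empQuantile X n p ω - ξ)) (Set.Iic t)).toNNReal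
    rw [Measure.map_apply (hT n) measurableSet_Iic]
    rfl
  have hIoc : ∀ (ν : ProbabilityMeasure ℝ) (a b : ℝ), a < b →
      ν (Set.Ioc a b) = ν (Set.Iic b) - ν (Set.Iic a) := by
    intro ν a b hab
    have hu : Set.Iic b = Set.Iic a ∪ Set.Ioc a b := (Set.Iic_union_Ioc_eq_Iic hab.le).symm
    have hdis : Disjoint (Set.Iic a) (Set.Ioc a b) := by
      rw [Set.disjoint_left]; intro x hx hx'; exact absurd hx'.1 (not_lt.2 hx)
    have hm := measure_union (μ := (ν : Measure ℝ)) hdis measurableSet_Ioc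
    rw [← hu] at hm
    have : ν (Set.Iic b) = ν (Set.Iic a) + ν (Set.Ioc a b) := by
      apply ENNReal.coe_injective
      simpa using hm
    rw [this, add_tsub_cancel_left]
  have hweak : Tendsto μs atTop (𝓝 μ) := by
    refine (isPiSystem_Ioc (id : ℝ → ℝ) (id : ℝ → ℝ)).tendsto_probabilityMeasure_of_tendsto_of_mem
      ?_ ?_ ?_
    · rintro s ⟨a, b, -, rfl⟩
      exact measurableSet_Ioc
    · intro u hu x hx
      obtain ⟨ε, hε, hsub⟩ := Metric.isOpen_iff.1 hu x hx
      refine ⟨Set.Ioc (x - ε/2) (x + ε/2), ⟨x - ε/2, x + ε/2, by simp only [id]; linarith, rfl⟩,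
        Ioc_mem_nhds (by linarith) (by linarith), fun y hy => hsub ?_⟩
      rw [Metric.mem_ball, Real.dist_eq, abs_lt]
      constructor <;> linarith [hy.1, hy.2]
    · rintro s ⟨a, b, hab, rfl⟩
      simp only [id] at hab ⊢
      simp only [hIoc _ a b hab]
      exact (hIic b).sub (hIic a)
  intro g
  have := (ProbabilityMeasure.tendsto_iff_forall_integral_tendsto.1 hweak) g
  refine this.congr fun n => ?_
  exact integral_map (hT n).aemeasurable g.continuous.aestronglyMeasurable
end

section
/- Let (ε_t)_{t∈ℤ} be an independent family of identically distributed real-valued random variables, let q ∈ ℕ, let θ_0,...,θ_q be real numbers, and define X_t = Σ_{j=0}^{q} θ_j ε_{t−j}. Fix an integer h ≥ 0, real numbers ξ_i, ξ_j, and set G_h(ξ_i,ξ_j) = P({X_0 ≤ ξ_i} ∩ {X_h ≤ ξ_j}). Define Ĝ_{h,n} = (1/n) Σ_{t=1}^{n} 1{X_t ≤ ξ_i} · 1{X_{t+h} ≤ ξ_j}. Then Ĝ_{h,n} converges in probability to G_h(ξ_i,ξ_j) as n → ∞. -/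
open MeasureTheory ProbabilityTheory Filter Topology

theorem aux_wlln {Ω : Type*} [MeasurableSpace Ω] (P : Measure Ω) [IsProbabilityMeasure P]
    (Y : ℕ → Ω → ℝ) (hm : ∀ t, Measurable (Y t)) (h0 : ∀ t ω, 0 ≤ Y t ω) (h1 : ∀ t ω, Y t ω ≤ 1)
    (G : ℝ) (hG : ∀ t, ∫ ω, Y t ω ∂P = G) (m : ℕ)
    (hind : ∀ s t, s + m < t → IndepFun (Y s) (Y t) P) (e : ℝ) (he : 0 < e) :
    Tendsto (fun n : ℕ => P {ω | e < |(n : ℝ)⁻¹ * ∑ t ∈ Finset.range n, Y t ω - G|})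
      atTop (𝓝 0) := by
  have hL : ∀ t, MemLp (Y t) 2 P := fun t =>
    MemLp.of_bound (hm t).aestronglyMeasurable 1
      (ae_of_all _ fun ω => by rw [Real.norm_eq_abs, abs_of_nonneg (h0 t ω)]; exact h1 t ω)
  have hcov1 : ∀ s t, cov[Y s, Y t; P] ≤ 1 := by
    intro s t
    rw [covariance_eq_sub (hL s) (hL t)]
    have a : ∫ ω, (Y s * Y t) ω ∂P ≤ ∫ ω, (1 : ℝ) ∂P := by
      apply integral_mono ((hL s).integrable_mul (hL t)) (integrable_const _)
      intro ω
      exact mul_le_one₀ (h1 s ω) (h0 t ω) (h1 t ω)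
    have b : 0 ≤ (∫ ω, Y s ω ∂P) * ∫ ω, Y t ω ∂P :=
      mul_nonneg (integral_nonneg (h0 s)) (integral_nonneg (h0 t))
    simp only [integral_const, probReal_univ, smul_eq_mul, mul_one] at a
    linarith
  have hcov : ∀ s t, cov[Y s, Y t; P] ≤ if t ∈ Finset.Icc (s - m) (s + m) then 1 else 0 := by
    intro s t
    split_ifs with hst
    · exact hcov1 s t
    · simp only [Finset.mem_Icc, not_and_or, not_le] at hst
      rcases hst with hst | hst
      · exact ((hind t s (by omega)).symm.covariance_eq_zero (hL s) (hL t)).le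
      · exact ((hind s t (by omega)).covariance_eq_zero (hL s) (hL t)).le
  have hvar : ∀ n : ℕ, Var[fun ω => ∑ t ∈ Finset.range n, Y t ω; P] ≤ n * (2 * m + 1) := by
    intro n
    rw [variance_fun_sum' (fun i _ => hL i)]
    have : ∀ s ∈ Finset.range n, ∑ t ∈ Finset.range n, cov[Y s, Y t; P] ≤ (2 * m + 1 : ℝ) := by
      intro s _
      calc _ ≤ ∑ t ∈ Finset.range n, (if t ∈ Finset.Icc (s - m) (s + m) then (1 : ℝ) else 0) :=
            Finset.sum_le_sum fun t _ => hcov s t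
        _ = (((Finset.range n).filter (· ∈ Finset.Icc (s - m) (s + m))).card : ℝ) := by
            rw [Finset.sum_boole]
        _ ≤ ((Finset.Icc (s - m) (s + m)).card : ℝ) := by
            norm_cast
            apply Finset.card_le_card
            intro x hx
            exact (Finset.mem_filter.1 hx).2
        _ ≤ 2 * m + 1 := by
            rw [Nat.card_Icc]
            norm_cast
            omega
    refine (Finset.sum_le_sum this).trans ?_
    rw [Finset.sum_const, Finset.card_range, nsmul_eq_mul]
  have hb : ∀ n : ℕ, 0 < n → P {ω | e < |(n : ℝ)⁻¹ * ∑ t ∈ Finset.range n, Y t ω - G|} ≤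
      ENNReal.ofReal ((2 * m + 1) / e ^ 2 * (n : ℝ)⁻¹) := by
    intro n hn
    have hn' : (0 : ℝ) < n := by exact_mod_cast hn
    have hS : MemLp (fun ω => (n : ℝ)⁻¹ * ∑ t ∈ Finset.range n, Y t ω) 2 P :=
      (memLp_finsetSum _ fun i _ => hL i).const_mul _
    have hE : ∫ ω, (n : ℝ)⁻¹ * ∑ t ∈ Finset.range n, Y t ω ∂P = G := by
      rw [integral_const_mul, integral_finsetSum _ fun i _ => (hL i).integrable (by norm_num)]
      simp [hG]
      field_simp
    have := meas_ge_le_variance_div_sq hS he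
    rw [hE] at this
    refine (measure_mono fun ω hω => ?_).trans (this.trans ?_)
    · simp only [Set.mem_ofPred_eq] at hω ⊢
      exact hω.le
    · apply ENNReal.ofReal_le_ofReal
      rw [variance_const_mul]
      calc _ ≤ (n : ℝ)⁻¹ ^ 2 * (n * (2 * m + 1)) / e ^ 2 := by gcongr; exact hvar n
        _ = _ := by field_simp
  have hlim : Tendsto (fun n : ℕ => ENNReal.ofReal ((2 * m + 1) / e ^ 2 * (n : ℝ)⁻¹)) atTop
      (𝓝 0) := by
    rw [← ENNReal.ofReal_zero]
    apply ENNReal.tendsto_ofReal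
    simpa using (tendsto_inv_atTop_nhds_zero_nat (𝕜 := ℝ)).const_mul ((2 * m + 1) / e ^ 2)
  exact tendsto_of_tendsto_of_tendsto_of_le_of_le' tendsto_const_nhds hlim
    (Eventually.of_forall fun _ => zero_le) ((eventually_gt_atTop 0).mono hb)

theorem aux_stat {Ω : Type*} [MeasurableSpace Ω] (P : Measure Ω) [IsProbabilityMeasure P]
    (ε : ℤ → Ω → ℝ) (hmeas : ∀ t, Measurable (ε t)) (hindep : iIndepFun ε P)
    (hident : ∀ t, IdentDistrib (ε t) (ε 0) P P) (F : (ℤ → ℝ) → ℝ) (hF : Measurable F) (t : ℤ) :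
    ∫ ω, F (fun k => ε (t + k) ω) ∂P = ∫ ω, F (fun k => ε k ω) ∂P := by
  have h1 := (hindep.precomp (add_right_injective t)).map_fun_eq_infinitePi_map
    (fun i => hmeas (t + i))
  have h2 := hindep.map_fun_eq_infinitePi_map hmeas
  have e1 : (fun i => P.map (ε (t + i))) = fun i => P.map (ε i) := by
    funext i
    rw [(hident (t + i)).map_eq, (hident i).map_eq]
  have h3 : P.map (fun ω i => ε (t + i) ω) = P.map (fun ω i => ε i ω) := by
    rw [h2, ← e1]; exact h1
  rw [← integral_map (f := F) (φ := fun ω i => ε (t + i) ω) (by fun_prop)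
    hF.aestronglyMeasurable, h3, integral_map (by fun_prop) hF.aestronglyMeasurable]

theorem aux_indep {Ω : Type*} [MeasurableSpace Ω] (P : Measure Ω) [IsProbabilityMeasure P]
    (ε : ℤ → Ω → ℝ) (hmeas : ∀ t, Measurable (ε t)) (hindep : iIndepFun ε P)
    (F : (ℤ → ℝ) → ℝ) (hF : Measurable F) (a b : ℤ)
    (hloc : ∀ v w : ℤ → ℝ, (∀ k ∈ Finset.Icc a b, v k = w k) → F v = F w)
    (s t : ℤ) (hst : s + b < t + a) :
    IndepFun (fun ω => F (fun k => ε (s + k) ω)) (fun ω => F (fun k => ε (t + k) ω)) P := by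
  classical
  let φ : (u : ℤ) → (Finset.Icc (u + a) (u + b) → ℝ) → ℝ := fun u v =>
    F (fun k => if hk : u + k ∈ Finset.Icc (u + a) (u + b) then v ⟨u + k, hk⟩ else 0)
  have hφ : ∀ u, Measurable (φ u) := by
    intro u
    refine hF.comp (measurable_pi_lambda _ fun k => ?_)
    split_ifs <;> fun_prop
  have key : ∀ u, (fun ω => F (fun k => ε (u + k) ω)) =
      φ u ∘ (fun ω (i : Finset.Icc (u + a) (u + b)) => ε i ω) := by
    intro u
    funext ω
    apply hloc
    intro k hk
    have : u + k ∈ Finset.Icc (u + a) (u + b) := by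
      simp only [Finset.mem_Icc] at hk ⊢; omega
    rw [dif_pos this]
  rw [key s, key t]
  refine (hindep.indepFun_finset _ _ ?_ hmeas).comp (hφ s) (hφ t)
  rw [Finset.disjoint_left]
  intro x hx hx'
  simp only [Finset.mem_Icc] at hx hx'
  omega

/-- Consistency of the empirical lag-`h` joint probability
`Ĝ_{h,n} = (1/n) Σ_{t=1}^{n} 1{X_t ≤ ξᵢ} 1{X_{t+h} ≤ ξⱼ}` for a moving-average
process: `Ĝ_{h,n} → G_h(ξᵢ, ξⱼ)` in probability. -/
theorem sma_empirical_joint_prob_consistent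
    {Ω : Type*} [MeasurableSpace Ω] (P : Measure Ω) [IsProbabilityMeasure P]
    (ε : ℤ → Ω → ℝ) (hmeas : ∀ t, Measurable (ε t))
    (hindep : iIndepFun ε P)
    (hident : ∀ t, IdentDistrib (ε t) (ε 0) P P)
    (q : ℕ) (θ : ℕ → ℝ)
    (X : ℤ → Ω → ℝ)
    (hX : ∀ t ω, X t ω = ∑ j ∈ Finset.range (q + 1), θ j * ε (t - j) ω)
    (h : ℤ) (hh : 0 ≤ h) (ξi ξj : ℝ)
    (G : ℝ) (hG : G = (P {ω | X 0 ω ≤ ξi ∧ X h ω ≤ ξj}).toReal)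
    (Ghat : ℕ → Ω → ℝ)
    (hGhat : ∀ n ω, Ghat n ω = (n : ℝ)⁻¹ *
      ∑ t ∈ Finset.range n,
        (if X (t + 1) ω ≤ ξi then (1 : ℝ) else 0) *
        (if X (t + 1 + h) ω ≤ ξj then (1 : ℝ) else 0)) :
    ∀ e : ℝ, 0 < e →
      Tendsto (fun n => P {ω | e < |Ghat n ω - G|}) atTop (𝓝 0) := by
  intro e he
  obtain ⟨F, hFd⟩ : ∃ F : (ℤ → ℝ) → ℝ, F = fun w =>
    (if ∑ j ∈ Finset.range (q + 1), θ j * w (-(j : ℤ)) ≤ ξi then (1 : ℝ) else 0) *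
    (if ∑ j ∈ Finset.range (q + 1), θ j * w (h - (j : ℤ)) ≤ ξj then (1 : ℝ) else 0)
    := ⟨_, rfl⟩
  have hF : Measurable F := by
    rw [hFd]
    refine Measurable.mul ?_ ?_ <;>
    · refine Measurable.ite (measurableSet_le (by fun_prop) measurable_const) ?_ ?_ <;>
      exact measurable_const
  have hFX : ∀ (t : ℤ) ω, F (fun k => ε (t + k) ω) =
      (if X t ω ≤ ξi then (1 : ℝ) else 0) * (if X (t + h) ω ≤ ξj then (1 : ℝ) else 0) := by
    intro t ω
    simp only [hFd, hX, ← sub_eq_add_neg, add_sub_assoc]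
  have hloc : ∀ v w : ℤ → ℝ, (∀ k ∈ Finset.Icc (-(q : ℤ)) h, v k = w k) → F v = F w := by
    intro v w hvw
    have a1 : ∑ j ∈ Finset.range (q + 1), θ j * v (-(j : ℤ)) =
        ∑ j ∈ Finset.range (q + 1), θ j * w (-(j : ℤ)) := by
      refine Finset.sum_congr rfl fun j hj => ?_
      rw [hvw _ (by simp only [Finset.mem_range, Finset.mem_Icc] at hj ⊢; omega)]
    have a2 : ∑ j ∈ Finset.range (q + 1), θ j * v (h - (j : ℤ)) =
        ∑ j ∈ Finset.range (q + 1), θ j * w (h - (j : ℤ)) := by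
      refine Finset.sum_congr rfl fun j hj => ?_
      rw [hvw _ (by simp only [Finset.mem_range, Finset.mem_Icc] at hj ⊢; omega)]
    simp only [hFd, a1, a2]
  have hXm : ∀ t, Measurable (X t) := by
    intro t
    have : X t = fun ω => ∑ j ∈ Finset.range (q + 1), θ j * ε (t - j) ω := funext (hX t)
    rw [this]
    fun_prop
  have hG0 : ∫ ω, F (fun k => ε k ω) ∂P = G := by
    have hset : MeasurableSet {ω | X 0 ω ≤ ξi ∧ X h ω ≤ ξj} :=
      (measurableSet_le (hXm 0) measurable_const).inter
        (measurableSet_le (hXm h) measurable_const)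
    have : (fun ω => F (fun k => ε k ω)) =
        Set.indicator {ω | X 0 ω ≤ ξi ∧ X h ω ≤ ξj} (fun _ => (1 : ℝ)) := by
      funext ω
      have := hFX 0 ω
      simp only [zero_add] at this
      rw [this, Set.indicator_apply]
      by_cases c1 : X 0 ω ≤ ξi <;> by_cases c2 : X h ω ≤ ξj <;> simp [c1, c2]
    rw [this, integral_indicator_const _ hset, hG]
    simp [Measure.real]
  have hmain := aux_wlln P (fun t ω => F (fun k => ε ((t : ℤ) + 1 + k) ω))
    (fun t => hF.comp (measurable_pi_lambda _ fun k => hmeas _))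
    (fun t ω => by simp only [hFd]; positivity)
    (fun t ω => by simp only [hFd]; split_ifs <;> norm_num)
    G (fun t => (aux_stat P ε hmeas hindep hident F hF _).trans hG0) (q + h.toNat)
    (fun s t hst => aux_indep P ε hmeas hindep F hF (-(q : ℤ)) h hloc _ _ (by omega)) e he
  simpa only [hFX, ← hGhat] using hmain
end
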